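/- (Lemma 3.5.) Let k, l be integers with k ≤ l < 2k and k ≥ 1. Let G = (V, E) be a multigraph, V_H ⊆ V with distinct A, B ∈ V_H, and suppose the induced subgraph H = (V_H, E_H) satisfies the renormalizability condition with respect to A, B. Then for every (k,l)-redundant subgraph g̃ of R(G) there exists a (k,l)-redundant subgraph g of G such that R(g) = g̃. -/

import Mathlib

/-!  Multigraphs: finite vertex set, finite multiset of edges (unordered pairs of
distinct vertices, parallel edges allowed, loops excluded). -/

/-- A multigraph on vertex type `V`: a finite set of vertices together with a
finite multiset of edges (unordered pairs of vertices). -/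
structure MG (V : Type*) where
  verts : Finset V
  edges : Multiset (Sym2 V)

namespace MG

variable {V : Type*} [DecidableEq V]

/-- Well-formedness: no loops, and every edge joins vertices of the graph. -/
def WF (G : MG V) : Prop :=
  (∀ e ∈ G.edges, ¬ e.IsDiag) ∧ (∀ e ∈ G.edges, e ∈ G.verts.sym2)

/-- `G'` is a subgraph of `G`: vertices a subset, edges a sub-multiset, and all
edges of `G'` join vertices of `G'`. -/
def IsSubgraph (G' G : MG V) : Prop :=
  G'.verts ⊆ G.verts ∧ G'.edges ≤ G.edges ∧ ∀ e ∈ G'.edges, e ∈ G'.verts.sym2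

/-- `(k,l)`-sparsity: every subgraph with `n > 1` vertices and `m` edges
satisfies `m ≤ k n - l`. -/
def Sparse (k l : ℤ) (G : MG V) : Prop :=
  ∀ G' : MG V, G'.IsSubgraph G → 1 < G'.verts.card →
    (Multiset.card G'.edges : ℤ) ≤ k * G'.verts.card - l

/-- `(k,l)`-redundant: not `(k,l)`-sparse. -/
def Redundant (k l : ℤ) (G : MG V) : Prop := ¬ Sparse k l G

/-- `(k,l)`-tight: sparse with exactly `k|V| - l` edges. -/
def Tight (k l : ℤ) (G : MG V) : Prop :=
  Sparse k l G ∧ (Multiset.card G.edges : ℤ) = k * G.verts.card - l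

/-- `A` and `B` are `(k,l)`-rigidly connected in `G` if some `(k,l)`-tight
subgraph of `G` contains both. -/
def RigidlyConnected (k l : ℤ) (G : MG V) (A B : V) : Prop :=
  ∃ T : MG V, T.IsSubgraph G ∧ Tight k l T ∧ A ∈ T.verts ∧ B ∈ T.verts

/-- `r_AB(H)`: the maximum of `|E_h| - k |V_h|` over all `(k,l)`-sparse
subgraphs `h` of `H` containing both `A` and `B`. -/
noncomputable def rAB (k l : ℤ) (H : MG V) (A B : V) : ℤ :=
  sSup {z : ℤ | ∃ h : MG V, h.IsSubgraph H ∧ Sparse k l h ∧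
    A ∈ h.verts ∧ B ∈ h.verts ∧ z = (Multiset.card h.edges : ℤ) - k * h.verts.card}

/-- `M_AB(H) = max (r_AB(H) + 2k, 0)`. -/
noncomputable def MAB (k l : ℤ) (H : MG V) (A B : V) : ℤ :=
  max (rAB k l H A B + 2 * k) 0

/-- The subgraph of `G` induced by a set `S` of vertices. -/
def induced (G : MG V) (S : Finset V) : MG V :=
  ⟨S, G.edges.filter (· ∈ S.sym2)⟩

/-- The intersection of `g` with the subgraph induced by `VH`: vertices
`g.verts ∩ VH` and the edges of `g` with both endpoints in `VH`. -/
def inter (g : MG V) (VH : Finset V) : MG V :=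
  ⟨g.verts ∩ VH, g.edges.filter (· ∈ VH.sym2)⟩

/-- The renormalizability condition: every edge of `G` with exactly one
endpoint in `VH` is incident to `A` or `B`. -/
def RenormCond (G : MG V) (VH : Finset V) (A B : V) : Prop :=
  ∀ e ∈ G.edges, (∃ v ∈ e, v ∈ VH) → (∃ v ∈ e, v ∉ VH) → (A ∈ e ∨ B ∈ e)

/-- The renormalized graph `R(G)`: delete all edges with both endpoints in
`VH`, delete the vertices of `VH` other than `A, B`, and insert
`M_AB(H)` parallel edges between `A` and `B`, where `H` is the subgraph
induced by `VH`. -/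
noncomputable def renormG (k l : ℤ) (G : MG V) (VH : Finset V) (A B : V) : MG V :=
  ⟨(G.verts \ VH) ∪ {A, B},
   G.edges.filter (fun e => e ∉ VH.sym2) +
     Multiset.replicate (MAB k l (G.induced VH) A B).toNat s(A, B)⟩

/-- Renormalization of a subgraph `g` of `G`: the part of `g` outside `VH` is
left unchanged, and its intersection `h` with the subgraph induced by `VH` is
replaced by `M_AB(h)` parallel `A`–`B` edges if both `A` and `B` belong to `g`,
and by no edges otherwise. -/
noncomputable def renormSub (k l : ℤ) (g : MG V) (VH : Finset V) (A B : V) : MG V :=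
  ⟨(g.verts \ VH) ∪ (g.verts ∩ {A, B}),
   g.edges.filter (fun e => e ∉ VH.sym2) +
     (if A ∈ g.verts ∧ B ∈ g.verts then
        Multiset.replicate (MAB k l (g.inter VH) A B).toNat s(A, B)
      else 0)⟩

/-- The maximum cardinality of a sub-multiset `E'` of the edges of `G` such
that `(V, E')` is `(k,l)`-sparse. -/
noncomputable def maxSparseCard (k l : ℤ) (G : MG V) : ℕ :=
  sSup {n : ℕ | ∃ E' : Multiset (Sym2 V), E' ≤ G.edges ∧
    Sparse k l (⟨G.verts, E'⟩ : MG V) ∧ Multiset.card E' = n}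

/-- The number of `(k,l)`-redundant edges of `G`. -/
noncomputable def nred (k l : ℤ) (G : MG V) : ℕ :=
  Multiset.card G.edges - maxSparseCard k l G

/-- Connectivity: any two vertices are joined by a path of edges. -/
def Connected (G : MG V) : Prop :=
  ∀ a ∈ G.verts, ∀ b ∈ G.verts,
    Relation.ReflTransGen (fun x y => s(x, y) ∈ G.edges) a b

end MG

/-! A subgraph of `R(G)` consists of edges of `G` outside `VH` and of `m ≤ M_AB(H)` parallel `A`–`B`
edges. Deleting edges one at a time from a sparse subgraph of `H` of maximal excess, until no
subgraph through `A` and `B` has more than the required excess, yields a subgraph `h` of `H` with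
`|E_h| - k|V_h| + 2k = m = M_AB(h)`. Replacing the `m` parallel edges by `h`, glued along `{A, B}`,
turns a subgraph through `A` and `B` into one of at least the same excess, so redundancy survives,
and renormalization turns `h` back into the `m` parallel edges. -/

namespace MG

variable {V : Type*} {k l : ℤ} {A B : V} {S : Finset V} {f g h F G H : MG V}

/-- The excess `|E_g| - k|V_g|`, in terms of which `(k,l)`-sparsity and `r_AB` are expressed. -/
def excess (k : ℤ) (g : MG V) : ℤ :=
  (Multiset.card g.edges : ℤ) - k * g.verts.card

/-- The set `S_AB(H)` of `(k,l)`-sparse subgraphs of `H` containing both `A` and `B`. -/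
def sparseSubgraphs (k l : ℤ) (H : MG V) (A B : V) : Set (MG V) :=
  {h | h.IsSubgraph H ∧ Sparse k l h ∧ A ∈ h.verts ∧ B ∈ h.verts}

lemma IsSubgraph.trans (hfg : f.IsSubgraph g) (hgG : g.IsSubgraph G) : f.IsSubgraph G :=
  ⟨hfg.1.trans hgG.1, hfg.2.1.trans hgG.2.1, hfg.2.2⟩

-- `IsSubgraph` is reflexive only on multigraphs whose edges join their own vertices.
lemma IsSubgraph.self (hg : g.IsSubgraph G) : g.IsSubgraph g :=
  ⟨subset_rfl, le_rfl, hg.2.2⟩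

lemma Sparse.mono (hG : Sparse k l G) (hg : g.IsSubgraph G) : Sparse k l g :=
  fun f hf => hG f (hf.trans hg)

lemma sparse_iff_excess_le :
    Sparse k l G ↔ ∀ g : MG V, g.IsSubgraph G → 1 < g.verts.card → excess k g ≤ -l := by
  refine forall_congr' fun g => forall_congr' fun _ => forall_congr' fun _ => ?_
  rw [excess, sub_le_iff_le_add, neg_add_eq_sub]

lemma rAB_eq_sSup_image : rAB k l H A B = sSup (excess k '' sparseSubgraphs k l H A B) := by
  refine congrArg sSup (Set.ext fun z => exists_congr fun h => ?_)
  simp only [sparseSubgraphs, excess, Set.mem_ofPred_eq, and_assoc, eq_comm]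

lemma edgeless_pair_mem_sparseSubgraphs [DecidableEq V] (hl : l ≤ 2 * k) (hA : A ∈ H.verts)
    (hB : B ∈ H.verts) : ⟨{A, B}, 0⟩ ∈ sparseSubgraphs k l H A B := by
  refine ⟨⟨?_, Multiset.zero_le _, by simp⟩, fun g hg hcard => ?_, by simp, by simp⟩
  · simp only [Finset.insert_subset_iff, Finset.singleton_subset_iff]
    exact ⟨hA, hB⟩
  · have hedges : g.edges = 0 := Multiset.le_zero.1 hg.2.1
    have hverts : g.verts.card = 2 :=
      le_antisymm ((Finset.card_le_card hg.1).trans Finset.card_le_two) hcard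
    rw [hedges, hverts, Multiset.card_zero]
    push_cast
    linarith

lemma excess_edgeless_pair [DecidableEq V] (hAB : A ≠ B) :
    excess k (⟨{A, B}, 0⟩ : MG V) = -(2 * k) := by
  simp only [excess, Multiset.card_zero, Finset.card_pair hAB]
  push_cast
  ring

lemma IsSubgraph.excess_le_card_edges (hk : 0 ≤ k) (hg : g.IsSubgraph G) :
    excess k g ≤ Multiset.card G.edges := by
  have hcard : (Multiset.card g.edges : ℤ) ≤ Multiset.card G.edges := by
    exact_mod_cast Multiset.card_le_card hg.2.1
  have hverts : 0 ≤ k * (g.verts.card : ℤ) := by positivity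
  exact (sub_le_self _ hverts).trans hcard

lemma isGreatest_rAB (hk : 0 ≤ k) (hl : l ≤ 2 * k) (hA : A ∈ H.verts) (hB : B ∈ H.verts) :
    IsGreatest (excess k '' sparseSubgraphs k l H A B) (rAB k l H A B) := by
  classical
  have hbdd : BddAbove (excess k '' sparseSubgraphs k l H A B) :=
    ⟨Multiset.card H.edges, Set.forall_mem_image.2 fun h hh => hh.1.excess_le_card_edges hk⟩
  have hne : (excess k '' sparseSubgraphs k l H A B).Nonempty :=
    ⟨_, Set.mem_image_of_mem _ (edgeless_pair_mem_sparseSubgraphs hl hA hB)⟩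
  rw [rAB_eq_sSup_image]
  exact ⟨Int.csSup_mem hne hbdd, fun _ hz => le_csSup hbdd hz⟩

lemma MAB_eq_rAB_add (hk : 0 ≤ k) (hl : l ≤ 2 * k) (hAB : A ≠ B) (hA : A ∈ H.verts)
    (hB : B ∈ H.verts) : MAB k l H A B = rAB k l H A B + 2 * k := by
  classical
  have hpair := (isGreatest_rAB hk hl hA hB).2
    (Set.mem_image_of_mem _ (edgeless_pair_mem_sparseSubgraphs hl hA hB))
  rw [excess_edgeless_pair hAB] at hpair
  exact max_eq_left (by linarith)

lemma excess_le_card_edges_sub_two_mul (hk : 0 ≤ k) (hg : 1 < g.verts.card) :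
    excess k g ≤ Multiset.card g.edges - 2 * k := by
  have hcard : (2 : ℤ) ≤ g.verts.card := by exact_mod_cast hg
  rw [excess, mul_comm 2 k]
  gcongr

lemma exists_mem_sparseSubgraphs_excess_sub_one (hk : 0 ≤ k) (hAB : A ≠ B)
    (hh : h ∈ sparseSubgraphs k l H A B) (hexc : -(2 * k) < excess k h) :
    ∃ h' ∈ sparseSubgraphs k l H A B, excess k h' = excess k h - 1 ∧
      Multiset.card h'.edges < Multiset.card h.edges := by
  classical
  obtain ⟨hH, hsparse, hA, hB⟩ := hh
  have hpos : 0 < Multiset.card h.edges := by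
    have := excess_le_card_edges_sub_two_mul hk (Finset.one_lt_card.2 ⟨A, hA, B, hB, hAB⟩)
    omega
  obtain ⟨e, he⟩ := Multiset.card_pos_iff_exists_mem.1 hpos
  have hsub : (⟨h.verts, h.edges.erase e⟩ : MG V).IsSubgraph h :=
    ⟨subset_rfl, Multiset.erase_le _ _, fun x hx => hH.2.2 x (Multiset.mem_of_mem_erase hx)⟩
  refine ⟨_, ⟨hsub.trans hH, hsparse.mono hsub, hA, hB⟩, ?_, Multiset.card_erase_lt_of_mem he⟩
  simp only [excess, ← Multiset.card_erase_add_one he]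
  push_cast
  ring

lemma exists_mem_sparseSubgraphs_rAB_eq (hk : 0 ≤ k) (hl : l ≤ 2 * k) (hAB : A ≠ B)
    (hA : A ∈ H.verts) (hB : B ∈ H.verts) {r : ℤ} (hr : -(2 * k) ≤ r) (hrH : r ≤ rAB k l H A B) :
    ∃ h ∈ sparseSubgraphs k l H A B, excess k h = r ∧ rAB k l h A B = r := by
  obtain ⟨g, hg, hgr⟩ := (isGreatest_rAB hk hl hA hB).1
  -- Among the sparse subgraphs of excess at least `r`, one with the fewest edges has excess `r`.
  obtain ⟨h, ⟨hh, hrh⟩, hmin⟩ := exists_minimalFor_of_wellFoundedLT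
    (fun h => h ∈ sparseSubgraphs k l H A B ∧ r ≤ excess k h) (fun h => Multiset.card h.edges)
    ⟨g, hg, hgr ▸ hrH⟩
  have hmax : ∀ p ∈ sparseSubgraphs k l h A B, excess k p ≤ r := by
    intro p hp
    by_contra! hlt
    obtain ⟨q, hq, hexc, hcard⟩ :=
      exists_mem_sparseSubgraphs_excess_sub_one hk hAB hp (hr.trans_lt hlt)
    have hfewer : Multiset.card q.edges < Multiset.card h.edges :=
      hcard.trans_le (Multiset.card_le_card hp.1.2.1)
    exact hfewer.not_ge (hmin ⟨⟨hq.1.trans hh.1, hq.2⟩, by omega⟩ hfewer.le)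
  have hself : h ∈ sparseSubgraphs k l h A B := ⟨hh.1.self, hh.2⟩
  have hexc : excess k h = r := le_antisymm (hmax h hself) hrh
  refine ⟨h, hh, hexc, ?_⟩
  rw [rAB_eq_sSup_image]
  exact IsGreatest.csSup_eq ⟨⟨h, hself, hexc⟩, Set.forall_mem_image.2 hmax⟩

lemma exists_mem_sparseSubgraphs_MAB_eq (hk : 0 ≤ k) (hl : l ≤ 2 * k) (hAB : A ≠ B)
    (hA : A ∈ H.verts) (hB : B ∈ H.verts) {m : ℤ} (hm : 0 ≤ m) (hmH : m ≤ MAB k l H A B) :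
    ∃ h ∈ sparseSubgraphs k l H A B, excess k h + 2 * k = m ∧ MAB k l h A B = m := by
  rw [MAB_eq_rAB_add hk hl hAB hA hB] at hmH
  obtain ⟨h, hh, hexc, hrAB⟩ := exists_mem_sparseSubgraphs_rAB_eq hk hl hAB hA hB
    (r := m - 2 * k) (by linarith) (by linarith)
  refine ⟨h, hh, by linarith, ?_⟩
  rw [MAB_eq_rAB_add hk hl hAB hh.2.2.1 hh.2.2.2, hrAB, sub_add_cancel]

variable [DecidableEq V]

/-- The union of two multigraphs that are regarded as edge-disjoint: they are glued along their
common vertices, and the multiplicities of common edges add up. Gluing a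
subgraph of `H` to a multigraph outside `H` undoes renormalization. -/
def glue (f h : MG V) : MG V :=
  ⟨f.verts ∪ h.verts, f.edges + h.edges⟩

/-- The multigraph obtained by deleting all edges with both endpoints in `S`, that is, the part of
`g` left unchanged by renormalization; the vertices in `S` are kept. -/
def deleteEdgesWithin (g : MG V) (S : Finset V) : MG V :=
  ⟨g.verts, g.edges.filter (· ∉ S.sym2)⟩

/-- The multigraph obtained by adding `m` parallel copies of the edge `e`, as renormalization does
with `e = s(A, B)`. -/
def addParallel (g : MG V) (m : ℕ) (e : Sym2 V) : MG V :=
  ⟨g.verts, g.edges + Multiset.replicate m e⟩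

lemma IsSubgraph.glue (hf : f.IsSubgraph F) (hh : h.IsSubgraph H) :
    (f.glue h).IsSubgraph (F.glue H) := by
  refine ⟨Finset.union_subset_union hf.1 hh.1, add_le_add hf.2.1 hh.2.1, fun e he => ?_⟩
  rcases Multiset.mem_add.1 he with he | he
  · exact Finset.sym2_mono Finset.subset_union_left (hf.2.2 e he)
  · exact Finset.sym2_mono Finset.subset_union_right (hh.2.2 e he)

lemma IsSubgraph.glue_right (hf : f.IsSubgraph F) (h : MG V) : f.IsSubgraph (F.glue h) :=
  ⟨hf.1.trans Finset.subset_union_left, hf.2.1.trans (Multiset.le_add_right _ _), hf.2.2⟩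

lemma excess_glue (k : ℤ) (f h : MG V) :
    excess k (f.glue h) = excess k f + excess k h + k * (f.verts ∩ h.verts).card := by
  have hcard : ((f.verts ∪ h.verts).card : ℤ) + (f.verts ∩ h.verts).card =
      f.verts.card + h.verts.card := by
    exact_mod_cast Finset.card_union_add_card_inter f.verts h.verts
  simp only [excess, MG.glue, Multiset.card_add]
  push_cast
  linear_combination -k * hcard

lemma deleteEdgesWithin_glue_induced (hS : S ⊆ G.verts) :
    (G.deleteEdgesWithin S).glue (G.induced S) = G := by
  rw [glue, deleteEdgesWithin, induced, Finset.union_eq_left.2 hS, add_comm,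
    Multiset.filter_add_not]

lemma excess_eq_excess_inter_add_card_sub (k : ℤ) (g : MG V) (E : Multiset (Sym2 V)) :
    excess k g = excess k ⟨g.verts, g.edges ∩ E⟩ + Multiset.card (g.edges - E) := by
  have hcard := congrArg Multiset.card (Multiset.sub_add_inter g.edges E)
  rw [Multiset.card_add] at hcard
  simp only [excess, ← hcard]
  push_cast
  ring

lemma Sparse.addParallel_of_glue {m : ℕ} (hAB : A ≠ B) (hh : h.IsSubgraph h)
    (hfh : f.verts ∩ h.verts = {A, B}) (hm : (m : ℤ) ≤ excess k h + 2 * k)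
    (hsparse : Sparse k l (f.glue h)) : Sparse k l (f.addParallel m s(A, B)) := by
  rw [sparse_iff_excess_le] at hsparse ⊢
  intro s hs hcard
  let t : MG V := ⟨s.verts, s.edges ∩ f.edges⟩
  have ht : t.IsSubgraph f :=
    ⟨hs.1, Multiset.inter_le_right, fun e he => hs.2.2 e (Multiset.mem_inter.1 he).1⟩
  have hnew : s.edges - f.edges ≤ Multiset.replicate m s(A, B) := tsub_le_iff_left.2 hs.2.1
  have hsplit : excess k s = excess k t + Multiset.card (s.edges - f.edges) :=
    excess_eq_excess_inter_add_card_sub k s f.edges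
  by_cases hs_AB : A ∈ s.verts ∧ B ∈ s.verts
  · have hth : t.verts ∩ h.verts = {A, B} := by
      refine Finset.Subset.antisymm (hfh ▸ Finset.inter_subset_inter_right hs.1) ?_
      have hh_AB : {A, B} ⊆ h.verts := hfh ▸ Finset.inter_subset_right
      exact Finset.subset_inter
        (Finset.insert_subset hs_AB.1 (Finset.singleton_subset_iff.2 hs_AB.2)) hh_AB
    have hnew_card : Multiset.card (s.edges - f.edges) ≤ m := by
      simpa only [Multiset.card_replicate] using Multiset.card_le_card hnew
    have hglue_card : 1 < (t.glue h).verts.card :=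
      hcard.trans_le (Finset.card_le_card Finset.subset_union_left)
    calc excess k s ≤ excess k t + (excess k h + 2 * k) := by
          rw [hsplit]
          gcongr
          exact (Int.ofNat_le.2 hnew_card).trans hm
      _ = excess k (t.glue h) := by
          rw [excess_glue, hth, Finset.card_pair hAB]
          push_cast
          ring
      _ ≤ -l := hsparse _ (ht.glue hh) hglue_card
  · have hnew_zero : s.edges - f.edges = 0 := by
      refine Multiset.eq_zero_of_forall_notMem fun e he => hs_AB ?_
      have hmem := hs.2.2 e (Multiset.mem_of_le tsub_le_self he)
      rwa [Multiset.eq_of_mem_replicate (Multiset.mem_of_le hnew he),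
        Finset.mk_mem_sym2_iff] at hmem
    rw [hsplit, hnew_zero, Multiset.card_zero, Nat.cast_zero, add_zero]
    exact hsparse t (ht.glue_right h) hcard

lemma verts_inter_subset_of_isSubgraph_renormG (hg : g.IsSubgraph (renormG k l G S A B)) :
    g.verts ∩ S ⊆ {A, B} := by
  intro v hv
  rw [Finset.mem_inter] at hv
  rcases Finset.mem_union.1 (hg.1 hv.1) with hout | hpair
  · exact absurd hv.2 (Finset.mem_sdiff.1 hout).2
  · exact hpair

lemma deleteEdgesWithin_isSubgraph_of_renormG (hS : S ⊆ G.verts) (hA : A ∈ S) (hB : B ∈ S)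
    (hg : g.IsSubgraph (renormG k l G S A B)) :
    (g.deleteEdgesWithin S).IsSubgraph (G.deleteEdgesWithin S) := by
  refine ⟨hg.1.trans (Finset.union_subset Finset.sdiff_subset ?_), ?_,
    fun e he => hg.2.2 e (Multiset.mem_of_mem_filter he)⟩
  · exact Finset.insert_subset (hS hA) (Finset.singleton_subset_iff.2 (hS hB))
  · have hnew : (Multiset.replicate (MAB k l (G.induced S) A B).toNat s(A, B)).filter
        (· ∉ S.sym2) = 0 := by
      refine Multiset.filter_eq_nil.2 fun e he => not_not.2 ?_
      rw [Multiset.eq_of_mem_replicate he]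
      exact Finset.mk_mem_sym2_iff.2 ⟨hA, hB⟩
    calc g.edges.filter (· ∉ S.sym2)
        ≤ (renormG k l G S A B).edges.filter (· ∉ S.sym2) := Multiset.filter_le_filter _ hg.2.1
      _ = G.edges.filter (· ∉ S.sym2) := by
        rw [renormG, Multiset.filter_add, hnew, add_zero,
          Multiset.filter_eq_self.2 fun _ => Multiset.of_mem_filter]

lemma filter_mem_sym2_le_replicate_of_isSubgraph_renormG
    (hg : g.IsSubgraph (renormG k l G S A B)) :
    g.edges.filter (· ∈ S.sym2) ≤
      Multiset.replicate (MAB k l (G.induced S) A B).toNat s(A, B) :=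
  calc g.edges.filter (· ∈ S.sym2)
      ≤ (renormG k l G S A B).edges.filter (· ∈ S.sym2) := Multiset.filter_le_filter _ hg.2.1
    _ = (Multiset.replicate (MAB k l (G.induced S) A B).toNat s(A, B)).filter (· ∈ S.sym2) := by
      simp [renormG, Multiset.filter_add, Multiset.filter_filter]
    _ ≤ _ := Multiset.filter_le _ _

lemma exists_eq_addParallel_of_isSubgraph_renormG (hg : g.IsSubgraph (renormG k l G S A B)) :
    ∃ m : ℕ, (m : ℤ) ≤ MAB k l (G.induced S) A B ∧
      g = (g.deleteEdgesWithin S).addParallel m s(A, B) := by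
  obtain ⟨m, hm, hedges⟩ :=
    Multiset.le_replicate_iff.1 (filter_mem_sym2_le_replicate_of_isSubgraph_renormG hg)
  refine ⟨m, (Int.le_toNat (le_max_right _ _)).1 hm, ?_⟩
  rw [addParallel, deleteEdgesWithin, ← hedges, add_comm, Multiset.filter_add_not]

lemma deleteEdgesWithin_eq_self_of_isSubgraph_renormG
    (hg : g.IsSubgraph (renormG k l G S A B)) (hAB : ¬(A ∈ g.verts ∧ B ∈ g.verts)) :
    g.deleteEdgesWithin S = g := by
  have hout : ∀ e ∈ g.edges, e ∉ S.sym2 := by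
    intro e he heS
    have heAB : e = s(A, B) := Multiset.eq_of_mem_replicate <|
      Multiset.mem_of_le (filter_mem_sym2_le_replicate_of_isSubgraph_renormG hg)
        (Multiset.mem_filter.2 ⟨he, heS⟩)
    exact hAB (Finset.mk_mem_sym2_iff.1 (heAB ▸ hg.2.2 e he))
  rw [deleteEdgesWithin, Multiset.filter_eq_self.2 hout]

lemma inter_glue (hfS : f.verts ∩ S ⊆ h.verts) (hf : ∀ e ∈ f.edges, e ∉ S.sym2)
    (hh : h.IsSubgraph h) (hhS : h.verts ⊆ S) : (f.glue h).inter S = h := by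
  have hh_edges : ∀ e ∈ h.edges, e ∈ S.sym2 := fun e he => Finset.sym2_mono hhS (hh.2.2 e he)
  rw [inter, glue, Finset.union_inter_distrib_right, Finset.inter_eq_left.2 hhS,
    Finset.union_eq_right.2 hfS, Multiset.filter_add, Multiset.filter_eq_nil.2 hf,
    Multiset.filter_eq_self.2 hh_edges, zero_add]

lemma deleteEdgesWithin_glue (hf : ∀ e ∈ f.edges, e ∉ S.sym2) (hh : h.IsSubgraph h)
    (hhS : h.verts ⊆ S) : (f.glue h).deleteEdgesWithin S = ⟨f.verts ∪ h.verts, f.edges⟩ := by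
  have hh_edges : ∀ e ∈ h.edges, ¬e ∉ S.sym2 :=
    fun e he => not_not.2 (Finset.sym2_mono hhS (hh.2.2 e he))
  rw [deleteEdgesWithin, glue, Multiset.filter_add, Multiset.filter_eq_self.2 hf,
    Multiset.filter_eq_nil.2 hh_edges, add_zero]

lemma renormSub_glue (hfS : f.verts ∩ S ⊆ {A, B}) (hf : ∀ e ∈ f.edges, e ∉ S.sym2)
    (hh : h.IsSubgraph h) (hhS : h.verts ⊆ S) (hfh : {A, B} ⊆ f.verts ∩ h.verts) :
    renormSub k l (f.glue h) S A B = f.addParallel (MAB k l h A B).toNat s(A, B) := by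
  obtain ⟨hf_AB, hh_AB⟩ := Finset.subset_inter_iff.1 hfh
  have hverts : (f.verts ∪ h.verts) \ S ∪ (f.verts ∪ h.verts) ∩ {A, B} = f.verts := by grind
  have hedges : (f.glue h).edges.filter (· ∉ S.sym2) = f.edges :=
    congrArg MG.edges (deleteEdgesWithin_glue hf hh hhS)
  have hmem : A ∈ (f.glue h).verts ∧ B ∈ (f.glue h).verts :=
    ⟨Finset.mem_union_left _ (hf_AB (by simp)), Finset.mem_union_left _ (hf_AB (by simp))⟩
  rw [renormSub, inter_glue (hfS.trans hh_AB) hf hh hhS, if_pos hmem, hedges]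
  exact congrArg (MG.mk · _) hverts

lemma renormSub_eq_self (hgS : g.verts ∩ S ⊆ {A, B}) (hg : ∀ e ∈ g.edges, e ∉ S.sym2)
    (hAB : ¬(A ∈ g.verts ∧ B ∈ g.verts)) : renormSub k l g S A B = g := by
  have hverts : g.verts \ S ∪ g.verts ∩ {A, B} = g.verts := by grind
  rw [renormSub, if_neg hAB, hverts, Multiset.filter_eq_self.2 hg, add_zero]

end MG

theorem redundant_renorm_lift_general {V : Type*} [DecidableEq V] (k l : ℤ)
    (hk : 0 ≤ k) (hl : l ≤ 2 * k) (G : MG V) (VH : Finset V) (hVH : VH ⊆ G.verts)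
    (A B : V) (hA : A ∈ VH) (hB : B ∈ VH) (hAB : A ≠ B)
    (gt : MG V) (hsub : gt.IsSubgraph (MG.renormG k l G VH A B)) (hred : MG.Redundant k l gt) :
    ∃ g : MG V, g.IsSubgraph G ∧ MG.Redundant k l g ∧ MG.renormSub k l g VH A B = gt := by
  obtain ⟨m, hm, hgt⟩ := MG.exists_eq_addParallel_of_isSubgraph_renormG hsub
  have hverts : gt.verts ∩ VH ⊆ {A, B} := MG.verts_inter_subset_of_isSubgraph_renormG hsub
  have houter : ∀ e ∈ (gt.deleteEdgesWithin VH).edges, e ∉ VH.sym2 :=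
    fun _ => Multiset.of_mem_filter
  have houterG := MG.deleteEdgesWithin_isSubgraph_of_renormG hVH hA hB hsub
  have hG := MG.deleteEdgesWithin_glue_induced hVH
  by_cases hgtAB : A ∈ gt.verts ∧ B ∈ gt.verts
  · obtain ⟨h, ⟨hhG, -, hhA, hhB⟩, hexc, hMAB⟩ :=
      MG.exists_mem_sparseSubgraphs_MAB_eq hk hl hAB hA hB (Int.natCast_nonneg m) hm
    have hinter : gt.verts ∩ h.verts = {A, B} :=
      ((Finset.inter_subset_inter_left hhG.1).trans hverts).antisymm (by grind)
    refine ⟨(gt.deleteEdgesWithin VH).glue h, hG ▸ houterG.glue hhG, fun hsparse => hred ?_, ?_⟩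
    · exact hgt ▸ hsparse.addParallel_of_glue hAB hhG.self hinter hexc.ge
    · rw [MG.renormSub_glue (f := gt.deleteEdgesWithin VH) hverts houter hhG.self hhG.1 hinter.ge,
        hMAB, Int.toNat_natCast, ← hgt]
  · rw [MG.deleteEdgesWithin_eq_self_of_isSubgraph_renormG hsub hgtAB] at houter houterG
    exact ⟨gt, hG ▸ houterG.glue_right _, hred, MG.renormSub_eq_self hverts houter hgtAB⟩

/-- Lemma 3.5: let `H`, the subgraph of `G` induced by `VH`, satisfy the
renormalizability condition w.r.t. `A, B`. Then every `(k,l)`-redundant subgraph `g̃` of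
`R(G)` is the image under renormalization of a `(k,l)`-redundant subgraph `g` of `G`. -/
theorem redundant_renorm_lift {V : Type*} [DecidableEq V] (k l : ℤ)
    (hk : 1 ≤ k) (hkl : k ≤ l) (hl2k : l < 2 * k)
    (G : MG V) (hWF : G.WF) (VH : Finset V) (hVH : VH ⊆ G.verts)
    (A B : V) (hA : A ∈ VH) (hB : B ∈ VH) (hAB : A ≠ B)
    (hren : MG.RenormCond G VH A B)
    (gt : MG V) (hsub : gt.IsSubgraph (MG.renormG k l G VH A B))
    (hred : MG.Redundant k l gt) :
    ∃ g : MG V, g.IsSubgraph G ∧ MG.Redundant k l g ∧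
      MG.renormSub k l g VH A B = gt :=
  redundant_renorm_lift_general k l (by linarith) hl2k.le G VH hVH A B hA hB hAB gt hsub hred
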